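/- arXiv:2203.00142 — 2 statements merged into one kernel-verified Lean document; each statement's English description precedes it below -/
import Mathlib

section
/- Consider the first-order Kuramoto model on the complete graph with n vertices with κ = 1 and θ̃(x) = x^α for x ≥ 0, where α ≥ 1 is fixed. Suppose the initial data satisfy ρ_1(0) > ρ_j(0) for all 2 ≤ j ≤ n, and set δ = ρ_1(0) − max_{2≤j≤n} ρ_j(0) > 0. Then every solution ρ satisfies, for all t ≥ 0, the two-sided differential inequality δ · n^{1−α} · (1 − ρ_1(t))^α ≤ dρ_1/dt (t) ≤ n · (1 − ρ_1(t))^α. -/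
/-- The maximum of `f` over all vertices different from `i0` (well-defined since `n ≥ 2`). -/
noncomputable def maxExcept {n : ℕ} (hn : 2 ≤ n) (i0 : Fin n) (f : Fin n → ℝ) : ℝ :=
  (Finset.univ.erase i0).sup'
    (by
      rw [Finset.erase_nonempty (Finset.mem_univ i0)]
      exact Finset.one_lt_card_iff_nontrivial.mp
        (by simp only [Finset.card_univ, Fintype.card_fin]; omega)) f

/-!
Write the system as `ρ' = kuramotoField θ ρ`. At a vertex `i` of maximal density every summand
of the field is at least the corresponding summand at any other vertex `j`, so each gap
`ρ i - ρ j` is nondecreasing as long as all gaps are positive. By continuous induction no gap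
ever falls below its initial value, hence all gaps stay at least `δ`. The lower bound is then
`δ * ∑ k ≠ i, θ (ρ k)` estimated by Jensen's inequality, and the upper bound holds at every vertex
because `min (ρ i) (ρ k) ≤ ρ k ≤ 1 - ρ i`.
-/

section

open Set Filter Topology

variable {ι : Type*}

theorem card_mul_map_sum_div_card_le {f : ℝ → ℝ} {D : Set ℝ} (hf : ConvexOn ℝ D f)
    {s : Finset ι} {p : ι → ℝ} (hp : ∀ k ∈ s, p k ∈ D) :
    (s.card : ℝ) * f ((∑ k ∈ s, p k) / s.card) ≤ ∑ k ∈ s, f (p k) := by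
  rcases s.eq_empty_or_nonempty with rfl | hs
  · simp
  have hcard : (0 : ℝ) < s.card := by exact_mod_cast hs.card_pos
  have hjensen := hf.map_sum_le (t := s) (w := fun _ ↦ (s.card : ℝ)⁻¹)
    (fun _ _ ↦ inv_nonneg.2 hcard.le) (by simp [hcard.ne']) hp
  simp only [smul_eq_mul, ← Finset.mul_sum] at hjensen
  rwa [div_eq_inv_mul, ← le_inv_mul_iff₀ hcard]

theorem monotoneOn_pi_of_hasDerivWithinAt_nonneg {g g' : ℝ → ι → ℝ} {D : Set ℝ}
    (hD : Convex ℝ D) (hg : ∀ t ∈ D, HasDerivWithinAt g (g' t) D t) (hg' : ∀ t ∈ D, 0 ≤ g' t) :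
    MonotoneOn g D := by
  have hcoord (j : ι) : MonotoneOn (fun t ↦ g t j) D :=
    monotoneOn_of_hasDerivWithinAt_nonneg hD
      (fun t ht ↦ (hasDerivWithinAt_pi.1 (hg t ht) j).continuousWithinAt)
      (fun t ht ↦ (hasDerivWithinAt_pi.1 (hg t (interior_subset ht)) j).mono interior_subset)
      (fun t ht ↦ hg' t (interior_subset ht) j)
  exact fun s hs t ht hst j ↦ hcoord j hs ht hst

theorem monotoneOn_Ici_of_deriv_nonneg_of_pos [Finite ι] {g g' : ℝ → ι → ℝ} {a : ℝ}
    (hg : ∀ t ∈ Ici a, HasDerivWithinAt g (g' t) (Ici a) t)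
    (hg' : ∀ t ∈ Ici a, (∀ j, 0 < g t j) → 0 ≤ g' t) (ha : ∀ j, 0 < g a j) :
    MonotoneOn g (Ici a) := by
  cases nonempty_fintype ι
  have hcont : ContinuousOn g (Ici a) := fun t ht ↦ (hg t ht).continuousWithinAt
  have hmono {D : Set ℝ} (hD : Convex ℝ D) (hDa : D ⊆ Ici a) (hpos : ∀ t ∈ D, ∀ j, 0 < g t j) :
      MonotoneOn g D :=
    monotoneOn_pi_of_hasDerivWithinAt_nonneg hD (fun t ht ↦ (hg t (hDa ht)).mono hDa)
      fun t ht ↦ hg' t (hDa ht) (hpos t ht)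
  have hinitial (T : ℝ) : Icc a T ⊆ {t | g a ≤ g t} := by
    have hclosed : IsClosed ({t | g a ≤ g t} ∩ Icc a T) := by
      rw [inter_comm]
      exact (hcont.mono Icc_subset_Ici_self).preimage_isClosed_of_isClosed isClosed_Icc isClosed_Ici
    refine hclosed.Icc_subset_of_forall_mem_nhdsWithin (le_refl (g a)) ?_
    rintro t ⟨hat : g a ≤ g t, ht, -⟩
    have hta : Ici t ⊆ Ici a := Ici_subset_Ici.2 ht
    have hpos : ∀ᶠ s in 𝓝[≥] t, ∀ j, 0 < g s j :=
      eventually_all.2 fun j ↦ ((continuousWithinAt_pi.1 (hcont t ht) j).mono hta).eventually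
        (lt_mem_nhds ((ha j).trans_le (hat j)))
    obtain ⟨u, htu, hu⟩ := mem_nhdsGE_iff_exists_Icc_subset.1 hpos
    have hmonoIcc := hmono (convex_Icc t u) (Icc_subset_Ici_self.trans hta) fun s hs ↦ hu hs
    filter_upwards [Ioc_mem_nhdsGT htu] with s hs
    exact hat.trans (hmonoIcc (left_mem_Icc.2 (le_of_lt htu)) (Ioc_subset_Icc_self hs) hs.1.le)
  exact hmono (convex_Ici a) Subset.rfl fun t ht j ↦
    (ha j).trans_le (hinitial t (right_mem_Icc.2 ht) j)

variable [Fintype ι]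

/-- The right-hand side of the first-order Kuramoto model on the complete graph with vertex set `ι`,
at the state `x`. The coupling constant `κ` is absorbed into `θ`. -/
def kuramotoField (θ : ℝ → ℝ) (x : ι → ℝ) (j : ι) : ℝ :=
  ∑ k, θ (min (x j) (x k)) * (x j - x k)

variable {θ : ℝ → ℝ} {x : ι → ℝ} {i : ι}

theorem kuramotoField_le_of_forall_le (hθ : ∀ u, 0 ≤ u → 0 ≤ θ u) (hx : 0 ≤ x)
    (hmax : ∀ k, x k ≤ x i) (j : ι) : kuramotoField θ x j ≤ kuramotoField θ x i := by
  refine Finset.sum_le_sum fun k _ ↦ ?_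
  rw [min_eq_right (hmax k)]
  rcases le_total (x k) (x j) with hkj | hjk
  · rw [min_eq_right hkj]
    exact mul_le_mul_of_nonneg_left (sub_le_sub_right (hmax j) _) (hθ _ (hx k))
  · rw [min_eq_left hjk]
    exact (mul_nonpos_of_nonneg_of_nonpos (hθ _ (hx j)) (sub_nonpos.2 hjk)).trans
      (mul_nonneg (hθ _ (hx k)) (sub_nonneg.2 (hmax k)))

theorem kuramotoField_le_card_mul (hmono : MonotoneOn θ (Ici 0)) (hθ₀ : 0 ≤ θ 0) (hx : 0 ≤ x) :
    kuramotoField θ x i ≤ Fintype.card ι * (x i * θ (∑ k, x k - x i)) := by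
  classical
  have hrest : ∑ k, x k - x i = ∑ k ∈ Finset.univ.erase i, x k :=
    (Finset.sum_erase_eq_sub (Finset.mem_univ i)).symm
  have hrest_nonneg : 0 ≤ ∑ k, x k - x i := hrest ▸ Finset.sum_nonneg fun k _ ↦ hx k
  have hθ {u : ℝ} (hu : 0 ≤ u) : 0 ≤ θ u := hθ₀.trans (hmono self_mem_Ici hu hu)
  rw [← nsmul_eq_mul]
  refine Finset.sum_le_card_nsmul _ _ _ fun k _ ↦ ?_
  rcases eq_or_ne k i with rfl | hki
  · simpa using mul_nonneg (hx k) (hθ hrest_nonneg)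
  have hmin_nonneg : 0 ≤ min (x i) (x k) := le_min (hx i) (hx k)
  have hmin_le : min (x i) (x k) ≤ ∑ k, x k - x i := (min_le_right _ _).trans <| hrest ▸
    Finset.single_le_sum (fun l _ ↦ hx l) (Finset.mem_erase.2 ⟨hki, Finset.mem_univ k⟩)
  calc θ (min (x i) (x k)) * (x i - x k)
      ≤ θ (min (x i) (x k)) * x i :=
        mul_le_mul_of_nonneg_left (sub_le_self _ (hx k)) (hθ hmin_nonneg)
    _ ≤ θ (∑ k, x k - x i) * x i :=
        mul_le_mul_of_nonneg_right (hmono hmin_nonneg hrest_nonneg hmin_le) (hx i)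
    _ = x i * θ (∑ k, x k - x i) := mul_comm _ _

theorem mul_card_mul_le_kuramotoField {δ : ℝ} (hθ : ∀ u, 0 ≤ u → 0 ≤ θ u) (hθ₀ : θ 0 = 0)
    (hconv : ConvexOn ℝ (Ici 0) θ) (hx : 0 ≤ x) (hδ : 0 ≤ δ) (hgap : ∀ k ≠ i, δ ≤ x i - x k) :
    δ * (Fintype.card ι * θ ((∑ k, x k - x i) / Fintype.card ι)) ≤ kuramotoField θ x i := by
  classical
  -- Zeroing the leader keeps it as a sample point, so that Jensen produces `card ι` rather than
  -- `card ι - 1`, at no cost since `θ 0 = 0`.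
  set y : ι → ℝ := Function.update x i 0 with hy
  have hy_nonneg (k : ι) : 0 ≤ y k := by
    rcases eq_or_ne k i with rfl | hki
    · simp [hy]
    · simpa [hy, hki] using hx k
  have hy_sum : ∑ k, y k = ∑ k, x k - x i := by
    rw [hy, Finset.sum_update_of_mem (Finset.mem_univ i), zero_add, ← Finset.erase_eq,
      Finset.sum_erase_eq_sub (Finset.mem_univ i)]
  have hterm (k : ι) : δ * θ (y k) ≤ θ (min (x i) (x k)) * (x i - x k) := by
    rcases eq_or_ne k i with rfl | hki
    · simp [hy, hθ₀]
    · have hki_le : x k ≤ x i := sub_nonneg.1 (hδ.trans (hgap k hki))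
      rw [hy, Function.update_of_ne hki, min_eq_right hki_le, mul_comm]
      exact mul_le_mul_of_nonneg_left (hgap k hki) (hθ _ (hx k))
  calc δ * (Fintype.card ι * θ ((∑ k, x k - x i) / Fintype.card ι))
      ≤ δ * ∑ k, θ (y k) := by
        rw [← hy_sum]
        exact mul_le_mul_of_nonneg_left
          (card_mul_map_sum_div_card_le hconv fun k _ ↦ hy_nonneg k) hδ
    _ = ∑ k, δ * θ (y k) := Finset.mul_sum _ _ _
    _ ≤ kuramotoField θ x i := Finset.sum_le_sum fun k _ ↦ hterm k

theorem monotoneOn_sub_of_isIntegralCurveOn_kuramotoField {ρ : ℝ → ι → ℝ} {a : ℝ}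
    (hθ : ∀ u, 0 ≤ u → 0 ≤ θ u)
    (hρ : IsIntegralCurveOn ρ (fun _ ↦ kuramotoField θ) (Ici a))
    (hρ_nonneg : ∀ t ∈ Ici a, 0 ≤ ρ t) (hmax : ∀ j ≠ i, ρ a j < ρ a i) (j : ι) :
    MonotoneOn (fun t ↦ ρ t i - ρ t j) (Ici a) := by
  rcases eq_or_ne j i with rfl | hj
  · simpa only [sub_self] using monotoneOn_const
  have hgaps : MonotoneOn (fun t (k : {k // k ≠ i}) ↦ ρ t i - ρ t k) (Ici a) := by
    refine monotoneOn_Ici_of_deriv_nonneg_of_pos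
      (g' := fun t (k : {k // k ≠ i}) ↦ kuramotoField θ (ρ t) i - kuramotoField θ (ρ t) k)
      (fun t ht ↦ hasDerivWithinAt_pi.2 fun k ↦ ?_) (fun t ht hpos k ↦ ?_)
      fun k ↦ sub_pos.2 (hmax k k.2)
    · exact (hasDerivWithinAt_pi.1 (hρ t ht) i).sub (hasDerivWithinAt_pi.1 (hρ t ht) k)
    · refine sub_nonneg.2 (kuramotoField_le_of_forall_le hθ (hρ_nonneg t ht) (fun l ↦ ?_) k)
      rcases eq_or_ne l i with rfl | hl
      · exact le_rfl
      · exact (sub_pos.1 (hpos ⟨l, hl⟩)).le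
  exact fun s hs t ht hst ↦ hgaps hs ht hst ⟨j, hj⟩

theorem kuramoto_complete_power_derivative_bounds_general {ρ : ℝ → ι → ℝ} {δ : ℝ}
    (hmono : MonotoneOn θ (Ici 0)) (hconv : ConvexOn ℝ (Ici 0) θ) (hθ₀ : θ 0 = 0)
    (hρ : IsIntegralCurveOn ρ (fun _ ↦ kuramotoField θ) (Ici 0))
    (hρ_nonneg : ∀ t ∈ Ici (0 : ℝ), 0 ≤ ρ t) (hρ_sum : ∀ t ∈ Ici (0 : ℝ), ∑ j, ρ t j = 1)
    (hδ : 0 < δ) (hgap : ∀ j ≠ i, δ ≤ ρ 0 i - ρ 0 j) {t : ℝ} (ht : 0 ≤ t) :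
    δ * (Fintype.card ι * θ ((1 - ρ t i) / Fintype.card ι)) ≤ kuramotoField θ (ρ t) i ∧
      kuramotoField θ (ρ t) i ≤ Fintype.card ι * θ (1 - ρ t i) := by
  have hθ (u : ℝ) (hu : 0 ≤ u) : 0 ≤ θ u := hθ₀ ▸ hmono self_mem_Ici hu hu
  have hmax (j : ι) (hj : j ≠ i) : ρ 0 j < ρ 0 i := sub_pos.1 (hδ.trans_le (hgap j hj))
  have hgap_t (j : ι) (hj : j ≠ i) : δ ≤ ρ t i - ρ t j :=
    (hgap j hj).trans <| monotoneOn_sub_of_isIntegralCurveOn_kuramotoField hθ hρ hρ_nonneg hmax j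
      self_mem_Ici ht ht
  have hle_one : ρ t i ≤ 1 := hρ_sum t ht ▸
    Finset.single_le_sum (fun j _ ↦ hρ_nonneg t ht j) (Finset.mem_univ i)
  have hlower := mul_card_mul_le_kuramotoField hθ hθ₀ hconv (hρ_nonneg t ht) hδ.le hgap_t
  have hupper := kuramotoField_le_card_mul (i := i) hmono hθ₀.ge (hρ_nonneg t ht)
  rw [hρ_sum t ht] at hlower hupper
  refine ⟨hlower, hupper.trans (mul_le_mul_of_nonneg_left ?_ (Nat.cast_nonneg _))⟩
  exact mul_le_of_le_one_left (hθ _ (sub_nonneg.2 hle_one)) hle_one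

end

theorem mul_div_rpow_eq_rpow_one_sub_mul {c s : ℝ} (hc : 0 < c) (hs : 0 ≤ s) (α : ℝ) :
    c * (s / c) ^ α = c ^ (1 - α) * s ^ α := by
  rw [Real.div_rpow hs hc.le, Real.rpow_sub hc, Real.rpow_one]
  ring

theorem le_maxExcept {n : ℕ} (hn : 2 ≤ n) {i j : Fin n} (hj : j ≠ i) (f : Fin n → ℝ) :
    f j ≤ maxExcept hn i f :=
  Finset.le_sup' f (Finset.mem_erase.2 ⟨hj, Finset.mem_univ j⟩)

/-- First-order Kuramoto model on the complete graph with `n` vertices,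
`κ = 1` and `θ̃(x) = x^α` (real power, `α ≥ 1`): if vertex `1` (the index `i0` with
`i0.val = 0`) is the unique initial maximizer and `δ` is the initial leading gap, then
`δ n^{1-α} (1-ρ_1)^α ≤ dρ_1/dt ≤ n (1-ρ_1)^α` for all `t ≥ 0`. -/
theorem kuramoto_complete_power_derivative_bounds
    (n : ℕ) (hn : 2 ≤ n) (α : ℝ) (hα : 1 ≤ α)
    (ρ : ℝ → Fin n → ℝ)
    (hode : ∀ t ≥ (0 : ℝ), ∀ j : Fin n, HasDerivAt (fun s => ρ s j)
      (∑ k : Fin n, (min (ρ t j) (ρ t k)) ^ α * (ρ t j - ρ t k)) t)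
    (hrange : ∀ t ≥ (0 : ℝ), ∀ j : Fin n, ρ t j ∈ Set.Icc (0 : ℝ) 1)
    (hsum : ∀ t ≥ (0 : ℝ), ∑ j : Fin n, ρ t j = 1)
    (i0 : Fin n) (hi0 : (i0 : ℕ) = 0)
    (hmax : ∀ j : Fin n, j ≠ i0 → ρ 0 j < ρ 0 i0)
    (δ : ℝ) (hδ : δ = ρ 0 i0 - maxExcept hn i0 (ρ 0)) (hδpos : 0 < δ) :
    ∀ t ≥ (0 : ℝ),
      δ * (n : ℝ) ^ ((1 : ℝ) - α) * (1 - ρ t i0) ^ α ≤ deriv (fun s => ρ s i0) t ∧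
      deriv (fun s => ρ s i0) t ≤ (n : ℝ) * (1 - ρ t i0) ^ α := by
  intro t ht
  have hcurve : IsIntegralCurveOn ρ (fun _ ↦ kuramotoField (· ^ α)) (Set.Ici 0) :=
    fun s hs ↦ hasDerivWithinAt_pi.2 fun j ↦ (hode s hs j).hasDerivWithinAt
  have hmono : MonotoneOn (fun u : ℝ ↦ u ^ α) (Set.Ici 0) :=
    Real.monotoneOn_rpow_Ici_of_exponent_nonneg (zero_le_one.trans hα)
  have hgap (j : Fin n) (hj : j ≠ i0) : δ ≤ ρ 0 i0 - ρ 0 j :=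
    hδ.trans_le (sub_le_sub_left (le_maxExcept hn hj (ρ 0)) _)
  have hbounds := kuramoto_complete_power_derivative_bounds_general hmono (convexOn_rpow hα)
    (Real.zero_rpow (by linarith)) hcurve (fun s hs j ↦ (hrange s hs j).1) hsum hδpos hgap ht
  rw [Fintype.card_fin, mul_div_rpow_eq_rpow_one_sub_mul (by positivity)
    (sub_nonneg.2 (hrange t ht i0).2), ← mul_assoc] at hbounds
  rwa [(hode t ht i0).deriv]
end

section
/- Let (ξ, ξ*) : [0,∞) → ℝ^n × ℝ^n be differentiable and let ρ : [0,∞) → ℝ^n be continuous, such that (ξ, ξ*) solve the transformed Hopf–Cole system dξ_j/dt = Σ_{k,l=1}^n ∂²_{jk}F(ρ) · ω_{kl} · θ_{kl} · (ξ_k − ξ_l) + Σ_{l=1}^n ω_{jl} · (ξ*_l − ξ*_j)(ξ_l − ξ_j) · (∂₁θ)(ρ_j, ρ_l) and dξ*_j/dt = −Σ_{k,l=1}^n ∂²_{jk}F(ρ) · ω_{kl} · θ_{kl} · (ξ*_k − ξ*_l) − Σ_{l=1}^n ω_{jl} · (ξ*_l − ξ*_j)(ξ_l − ξ_j) · (∂₁θ)(ρ_j,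 ρ_l). If ξ_j(0) = 0 for all j = 1,…,n, then ξ_j(t) = 0 for all j and all t ≥ 0, and ξ* satisfies the reduced linear dynamics dξ*_j/dt = −Σ_{k,l=1}^n ∂²_{jk}F(ρ) · ω_{kl} · θ_{kl} · (ξ*_k − ξ*_l). -/
/-- Partial derivative `∂F/∂ρ_j` of a function `F : ℝⁿ → ℝ`, as the Fréchet derivative
applied to the `j`-th coordinate direction. -/
noncomputable def partialD {n : ℕ} (F : (Fin n → ℝ) → ℝ) (j : Fin n)
    (ρ : Fin n → ℝ) : ℝ :=
  fderiv ℝ F ρ (Pi.single j 1)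

/-- Partial derivative of `θ : ℝ² → ℝ` in its first argument. -/
noncomputable def d1 (θ : ℝ → ℝ → ℝ) (a b : ℝ) : ℝ :=
  deriv (fun x => θ x b) a

/-!
Once `ρ` and `ξ*` are regarded as given continuous curves, the equation for `ξ` is linear and
homogeneous: it reads `ξ' = (H L_c - L_b) ξ`, where `H` is the Hessian of `F` at `ρ` and `L_c`,
`L_b` are the graph Laplacians with weights `c_{kl} = ω_{kl} θ_{kl}` and
`b_{jl} = ω_{jl} (ξ*_l - ξ*_j) ∂₁θ_{jl}`. The coefficient matrix is continuous in time, so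
Grönwall's inequality forces `ξ = 0`, and the coupling term in the equation for `ξ*` vanishes
with it.
-/

open Set Matrix

section LinearODE

theorem eq_zero_of_hasDerivWithinAt_clm_apply {E : Type*} [NormedAddCommGroup E] [NormedSpace ℝ E]
    {A : ℝ → E →L[ℝ] E} {x : ℝ → E} {a : ℝ} (hA : ContinuousOn A (Ici a))
    (hx : ContinuousOn x (Ici a))
    (hx' : ∀ t ≥ a, HasDerivWithinAt x (A t (x t)) (Ici t) t) (ha : x a = 0) :
    ∀ t ≥ a, x t = 0 := by
  intro T hT
  obtain ⟨K, hK⟩ : ∃ K, ∀ t ∈ Icc a T, ‖A t‖ ≤ K :=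
    isCompact_Icc.exists_bound_of_continuousOn (hA.mono Icc_subset_Ici_self)
  refine eq_zero_of_abs_deriv_le_mul_abs_self_of_eq_zero_right (K := K)
    (hx.mono Icc_subset_Ici_self) (fun t ht => hx' t ht.1) ha (fun t ht => ?_) T ⟨hT, le_rfl⟩
  exact (A t).le_of_opNorm_le (hK t (Ico_subset_Icc_self ht)) (x t)

theorem eq_zero_of_hasDerivWithinAt_mulVec {ι : Type*} [Fintype ι] {A : ℝ → Matrix ι ι ℝ}
    {x : ℝ → ι → ℝ} {a : ℝ} (hA : ContinuousOn A (Ici a)) (hx : ContinuousOn x (Ici a))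
    (hx' : ∀ t ≥ a, HasDerivWithinAt x (A t *ᵥ x t) (Ici t) t) (ha : x a = 0) :
    ∀ t ≥ a, x t = 0 := by
  refine eq_zero_of_hasDerivWithinAt_clm_apply
    (A := fun t => (A t).mulVecLin.toContinuousLinearMap) ?_ hx hx' ha
  refine continuousOn_clm_apply.2 fun v => ?_
  have mulVec_continuous : Continuous fun M : Matrix ι ι ℝ => M *ᵥ v :=
    continuous_id.matrix_mulVec continuous_const
  exact mulVec_continuous.comp_continuousOn hA

end LinearODE

section PartialDerivatives

theorem contDiff_partialD {n : ℕ} {F : (Fin n → ℝ) → ℝ} {m r : WithTop ℕ∞} (hF : ContDiff ℝ r F)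
    (hmr : m + 1 ≤ r) (j : Fin n) : ContDiff ℝ m (partialD F j) :=
  (hF.fderiv_right hmr).clm_apply contDiff_const

theorem d1_eq_fderiv {θ : ℝ → ℝ → ℝ} {p : ℝ × ℝ}
    (hθ : DifferentiableAt ℝ (fun q : ℝ × ℝ => θ q.1 q.2) p) :
    d1 θ p.1 p.2 = fderiv ℝ (fun q : ℝ × ℝ => θ q.1 q.2) p (1, 0) := by
  have hasDerivAt_slice : HasDerivAt (fun x : ℝ => (x, p.2)) ((1 : ℝ), (0 : ℝ)) p.1 :=
    (hasDerivAt_id p.1).prodMk (hasDerivAt_const p.1 p.2)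
  exact (hθ.hasFDerivAt.comp_hasDerivAt (f := fun x : ℝ => (x, p.2)) p.1 hasDerivAt_slice).deriv

theorem continuous_d1 {θ : ℝ → ℝ → ℝ} (hθ : ContDiff ℝ 1 (fun p : ℝ × ℝ => θ p.1 p.2)) :
    Continuous (fun p : ℝ × ℝ => d1 θ p.1 p.2) := by
  simp_rw [fun p : ℝ × ℝ => d1_eq_fderiv (hθ.differentiable one_ne_zero p)]
  exact (hθ.continuous_fderiv one_ne_zero).clm_apply continuous_const

/-- The Hessian matrix `(∂²_{jk} F(r))_{jk}`, with rows indexed by the variable differentiated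
first. -/
noncomputable def hessianMatrix {n : ℕ} (F : (Fin n → ℝ) → ℝ) (r : Fin n → ℝ) :
    Matrix (Fin n) (Fin n) ℝ :=
  of fun j k => partialD (partialD F j) k r

theorem continuous_hessianMatrix {n : ℕ} {F : (Fin n → ℝ) → ℝ} (hF : ContDiff ℝ 2 F) :
    Continuous (hessianMatrix F) :=
  continuous_matrix fun j k =>
    (contDiff_partialD (m := 0) (contDiff_partialD hF one_add_one_eq_two.le j)
      (zero_add 1).le k).continuous

end PartialDerivatives

section WeightedLaplacian

variable {ι R : Type*} [Fintype ι] [DecidableEq ι]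

/-- The Laplacian `D - c` of a finite graph with edge weights `c`, where `D` is the diagonal matrix
of the row sums of `c`. The weights may be signed and need not be symmetric, and `c j j` cancels. -/
def weightedLaplacian [AddCommGroup R] (c : Matrix ι ι R) : Matrix ι ι R :=
  diagonal (fun j => ∑ l, c j l) - c

theorem weightedLaplacian_mulVec_apply [NonUnitalNonAssocRing R] (c : Matrix ι ι R) (x : ι → R)
    (j : ι) : (weightedLaplacian c *ᵥ x) j = ∑ l, c j l * (x j - x l) := by
  rw [weightedLaplacian, sub_mulVec, Pi.sub_apply, mulVec_diagonal, Finset.sum_mul]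
  simp only [mulVec, dotProduct, mul_sub, Finset.sum_sub_distrib]

theorem continuous_weightedLaplacian [AddCommGroup R] [TopologicalSpace R]
    [IsTopologicalAddGroup R] :
    Continuous (weightedLaplacian : Matrix ι ι R → Matrix ι ι R) := by
  have rowSum_continuous : Continuous fun c : Matrix ι ι R => fun j => ∑ l, c j l :=
    continuous_pi fun j => continuous_finsetSum _ fun l _ => continuous_id.matrix_elem j l
  exact rowSum_continuous.matrix_diagonal.sub continuous_id

end WeightedLaplacian

section HopfCole

variable {n : ℕ} (ω : Fin n → Fin n → ℝ) (F : (Fin n → ℝ) → ℝ) (θ : ℝ → ℝ → ℝ)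

/-- The matrix `M` for which the `ξ`-equation of the transformed Hopf–Cole system is `ξ' = M ξ`,
as a function of the current density `r = ρ(t)` and the current value `η = ξ*(t)`. -/
noncomputable def hopfColeMatrix (r η : Fin n → ℝ) : Matrix (Fin n) (Fin n) ℝ :=
  hessianMatrix F r * weightedLaplacian (of fun k l => ω k l * θ (r k) (r l)) -
    weightedLaplacian (of fun j l => ω j l * (η l - η j) * d1 θ (r j) (r l))

theorem hopfColeMatrix_mulVec_apply (r η x : Fin n → ℝ) (j : Fin n) :
    (hopfColeMatrix ω F θ r η *ᵥ x) j =
      (∑ k, ∑ l, partialD (partialD F j) k r * ω k l * θ (r k) (r l) * (x k - x l)) +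
        ∑ l, ω j l * (η l - η j) * (x l - x j) * d1 θ (r j) (r l) := by
  have hessian_part : (hessianMatrix F r *ᵥ
        (weightedLaplacian (of fun k l => ω k l * θ (r k) (r l)) *ᵥ x)) j =
      ∑ k, ∑ l, partialD (partialD F j) k r * ω k l * θ (r k) (r l) * (x k - x l) := by
    rw [funext (weightedLaplacian_mulVec_apply _ x)]
    simp only [mulVec, dotProduct, hessianMatrix, of_apply, Finset.mul_sum, mul_assoc]
  have coupling_part :
      -(weightedLaplacian (of fun j l => ω j l * (η l - η j) * d1 θ (r j) (r l)) *ᵥ x) j =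
        ∑ l, ω j l * (η l - η j) * (x l - x j) * d1 θ (r j) (r l) := by
    rw [weightedLaplacian_mulVec_apply, ← Finset.sum_neg_distrib]
    refine Finset.sum_congr rfl fun l _ => ?_
    rw [of_apply]
    ring
  rw [hopfColeMatrix, sub_mulVec, ← mulVec_mulVec, Pi.sub_apply, sub_eq_add_neg, hessian_part,
    coupling_part]

variable {F θ}

theorem continuous_hopfColeMatrix (hF : ContDiff ℝ 2 F)
    (hθ : ContDiff ℝ 1 (fun p : ℝ × ℝ => θ p.1 p.2)) :
    Continuous fun p : (Fin n → ℝ) × (Fin n → ℝ) => hopfColeMatrix ω F θ p.1 p.2 := by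
  have evalPair (j l : Fin n) :
      Continuous fun p : (Fin n → ℝ) × (Fin n → ℝ) => (p.1 j, p.1 l) := by
    fun_prop
  have mobility (k l : Fin n) :
      Continuous fun p : (Fin n → ℝ) × (Fin n → ℝ) => θ (p.1 k) (p.1 l) :=
    hθ.continuous.comp (evalPair k l)
  have mobility_deriv (j l : Fin n) :
      Continuous fun p : (Fin n → ℝ) × (Fin n → ℝ) => d1 θ (p.1 j) (p.1 l) :=
    (continuous_d1 hθ).comp (evalPair j l)
  refine (((continuous_hessianMatrix hF).comp continuous_fst).matrix_mul
    (continuous_weightedLaplacian.comp (continuous_matrix fun k l => ?_))).sub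
    (continuous_weightedLaplacian.comp (continuous_matrix fun j l => ?_))
  · exact continuous_const.mul (mobility k l)
  · have dual_gradient : Continuous fun p : (Fin n → ℝ) × (Fin n → ℝ) => p.2 l - p.2 j := by
      fun_prop
    exact (continuous_const.mul dual_gradient).mul (mobility_deriv j l)

end HopfCole

/-- The time derivatives are taken within `S`, so that `S = Ici 0` is the reading with a one-sided
derivative at `t = 0` and `S = univ` the reading with a two-sided one. -/
theorem hopf_cole_xi_vanishes_general {n : ℕ} {ω : Fin n → Fin n → ℝ}
    {F : (Fin n → ℝ) → ℝ} (hF : ContDiff ℝ 2 F)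
    {θ : ℝ → ℝ → ℝ} (hθ : ContDiff ℝ 1 (fun p : ℝ × ℝ => θ p.1 p.2))
    {S : Set ℝ} (hS : Ici 0 ⊆ S)
    {ρ : ℝ → Fin n → ℝ} (hρ : ContinuousOn ρ (Ici 0)) {ξ ξs : ℝ → Fin n → ℝ}
    (hξ : ∀ t ≥ (0 : ℝ), ∀ j : Fin n, HasDerivWithinAt (fun s => ξ s j)
      ((∑ k : Fin n, ∑ l : Fin n,
          partialD (partialD F j) k (ρ t) * ω k l * θ (ρ t k) (ρ t l) * (ξ t k - ξ t l))
        + ∑ l : Fin n,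
            ω j l * (ξs t l - ξs t j) * (ξ t l - ξ t j) * d1 θ (ρ t j) (ρ t l)) S t)
    (hξs : ∀ t ≥ (0 : ℝ), ∀ j : Fin n, HasDerivWithinAt (fun s => ξs s j)
      (-(∑ k : Fin n, ∑ l : Fin n,
          partialD (partialD F j) k (ρ t) * ω k l * θ (ρ t k) (ρ t l) * (ξs t k - ξs t l))
        - ∑ l : Fin n,
            ω j l * (ξs t l - ξs t j) * (ξ t l - ξ t j) * d1 θ (ρ t j) (ρ t l)) S t)
    (hξ0 : ∀ j : Fin n, ξ 0 j = 0) :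
    (∀ t ≥ (0 : ℝ), ∀ j : Fin n, ξ t j = 0) ∧
    (∀ t ≥ (0 : ℝ), ∀ j : Fin n, HasDerivWithinAt (fun s => ξs s j)
      (-(∑ k : Fin n, ∑ l : Fin n,
          partialD (partialD F j) k (ρ t) * ω k l * θ (ρ t k) (ρ t l)
            * (ξs t k - ξs t l))) S t) := by
  have hξ_linear : ∀ t ≥ 0, HasDerivWithinAt ξ (hopfColeMatrix ω F θ (ρ t) (ξs t) *ᵥ ξ t) S t :=
    fun t ht => hasDerivWithinAt_pi.2 fun j => by
      simpa only [hopfColeMatrix_mulVec_apply] using hξ t ht j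
  have hξ_cont : ContinuousOn ξ (Ici 0) := fun t ht =>
    (hξ_linear t ht).continuousWithinAt.mono hS
  have hξs_cont : ContinuousOn ξs (Ici 0) := continuousOn_pi.2 fun j t ht =>
    (hξs t ht j).continuousWithinAt.mono hS
  have hξ_zero : ∀ t ≥ 0, ξ t = 0 := eq_zero_of_hasDerivWithinAt_mulVec
    ((continuous_hopfColeMatrix ω hF hθ).comp_continuousOn (hρ.prodMk hξs_cont)) hξ_cont
    (fun t ht => (hξ_linear t ht).mono ((Ici_subset_Ici.2 ht).trans hS)) (funext hξ0)
  refine ⟨fun t ht j => congrFun (hξ_zero t ht) j, fun t ht j => ?_⟩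
  simpa [hξ_zero t ht] using hξs t ht j

/-- If `(ξ, ξ*)` solves the transformed Hopf–Cole system along a
continuous curve `ρ` and `ξ(0) = 0`, then `ξ(t) = 0` for all `t ≥ 0`, and `ξ*`
satisfies the reduced linear dynamics
`dξ*_j/dt = -Σ_{k,l} ∂²_{jk}F(ρ) ω_{kl} θ_{kl} (ξ*_k - ξ*_l)`. -/
theorem hopf_cole_xi_vanishes
    (n : ℕ) (hn : 2 ≤ n)
    (ω : Fin n → Fin n → ℝ)
    (hωsym : ∀ j l : Fin n, ω j l = ω l j)
    (hωdiag : ∀ j : Fin n, ω j j = 0)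
    (F : (Fin n → ℝ) → ℝ) (hF : ContDiff ℝ 2 F)
    (θ : ℝ → ℝ → ℝ) (hθ : ContDiff ℝ 1 (fun p : ℝ × ℝ => θ p.1 p.2))
    (hθsym : ∀ a b : ℝ, θ a b = θ b a)
    (ρ : ℝ → Fin n → ℝ) (hρcont : Continuous ρ)
    (ξ ξs : ℝ → Fin n → ℝ)
    (hξ : ∀ t ≥ (0 : ℝ), ∀ j : Fin n, HasDerivAt (fun s => ξ s j)
      ((∑ k : Fin n, ∑ l : Fin n,
          partialD (partialD F j) k (ρ t) * ω k l * θ (ρ t k) (ρ t l) * (ξ t k - ξ t l))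
        + ∑ l : Fin n,
            ω j l * (ξs t l - ξs t j) * (ξ t l - ξ t j) * d1 θ (ρ t j) (ρ t l)) t)
    (hξs : ∀ t ≥ (0 : ℝ), ∀ j : Fin n, HasDerivAt (fun s => ξs s j)
      (-(∑ k : Fin n, ∑ l : Fin n,
          partialD (partialD F j) k (ρ t) * ω k l * θ (ρ t k) (ρ t l) * (ξs t k - ξs t l))
        - ∑ l : Fin n,
            ω j l * (ξs t l - ξs t j) * (ξ t l - ξ t j) * d1 θ (ρ t j) (ρ t l)) t)
    (hξ0 : ∀ j : Fin n, ξ 0 j = 0) :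
    (∀ t ≥ (0 : ℝ), ∀ j : Fin n, ξ t j = 0) ∧
    (∀ t ≥ (0 : ℝ), ∀ j : Fin n, HasDerivAt (fun s => ξs s j)
      (-(∑ k : Fin n, ∑ l : Fin n,
          partialD (partialD F j) k (ρ t) * ω k l * θ (ρ t k) (ρ t l)
            * (ξs t k - ξs t l))) t) := by
  simp only [← hasDerivWithinAt_univ] at hξ hξs ⊢
  exact hopf_cole_xi_vanishes_general hF hθ (subset_univ _) hρcont.continuousOn hξ hξs hξ0
end
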